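/- Let x ∈ dom ψ and let x⁺ be the (unique) minimizer over Ĥ of z ↦ ψ(z) + (1/2)‖x − ∇φ(x) − z‖². Then for every z ∈ Ĥ, (1 + μ_ψ)·⟨x − x⁺, z − x⟩ ≤ ( (φ + ψ)(z) − (φ + ψ)(x) − ((μ_φ + μ_ψ)/2)‖z − x‖² ) + ( ψ(x) − ψ(x⁺) + ⟨∇φ(x), x − x⁺⟩ ) − (1 + μ_ψ/2)‖x − x⁺‖². -/

import Mathlib

/-!
The optimality condition at `x⁺` says that `x - ∇φ(x) - x⁺` is a subgradient of `ψ` at `x⁺`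
(`subgradient_of_prox`). Strong convexity of `ψ` at `x⁺` with this subgradient, added to strong
convexity of `φ` at `x`, gives the inequality after expanding
`‖z - x⁺‖² = ‖z - x‖² + 2⟪x - x⁺, z - x⟫ + ‖x - x⁺‖²`; the terms in `∇φ(x)` cancel.
-/

open scoped RealInnerProductSpace

/-- If `c + t * (D / 2)` is nonnegative for all small `t > 0`, so is its limit `c` as `t → 0`. -/
theorem nonneg_of_forall_small {c D : ℝ} (hD : 0 ≤ D)
    (h : ∀ t : ℝ, 0 < t → t ≤ 1 → 0 ≤ c + t * (D / 2)) : 0 ≤ c := by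
  by_contra! hc
  have hpos : 0 < D - c := by linarith
  -- at this `t`, `t * (D / 2)` is at most `-c / 2`
  have ht := h (-c / (D - c)) (div_pos (by linarith) hpos)
    ((div_le_one hpos).2 (by linarith))
  have key : -c / (D - c) * (D / 2) ≤ -c / 2 := by
    rw [div_mul_eq_mul_div, div_le_iff₀ hpos]
    nlinarith
  linarith

/-- A minimizer `p` of `ψ + ½‖y - ·‖²` satisfies `y - p ∈ ∂ψ(p)`: compare `p` with the points of
the segment from `p` to `w`, divide by the step length and let it tend to `0`. -/
theorem subgradient_of_prox {E : Type*} [NormedAddCommGroup E] [InnerProductSpace ℝ E]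
    (ψ : E → EReal) (hψbot : ∀ z, ψ z ≠ ⊥)
    (hψconv : ∀ (w z : E) (t : ℝ), 0 ≤ t → t ≤ 1 →
      ψ (t • w + (1 - t) • z) ≤ (t : EReal) * ψ w + ((1 - t : ℝ) : EReal) * ψ z)
    (y p : E) (hp : ψ p ≠ ⊤)
    (hmin : ∀ w : E, ψ p + ((1 / 2 * ‖y - p‖ ^ 2 : ℝ) : EReal) ≤
      ψ w + ((1 / 2 * ‖y - w‖ ^ 2 : ℝ) : EReal)) (w : E) :
    ψ p + ((⟪y - p, w - p⟫ : ℝ) : EReal) ≤ ψ w := by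
  by_cases hw : ψ w = ⊤
  · rw [hw]; exact le_top
  obtain ⟨a, ha⟩ : ∃ a : ℝ, ψ p = a := ⟨_, (EReal.coe_toReal hp (hψbot p)).symm⟩
  obtain ⟨b, hb⟩ : ∃ b : ℝ, ψ w = b := ⟨_, (EReal.coe_toReal hw (hψbot w)).symm⟩
  rw [ha, hb]
  norm_cast
  suffices 0 ≤ b - a - ⟪y - p, w - p⟫ by linarith
  refine nonneg_of_forall_small (sq_nonneg ‖w - p‖) fun t ht ht1 => ?_
  have h := (hmin (t • w + (1 - t) • p)).trans (add_le_add_left (hψconv w p t ht.le ht1) _)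
  rw [ha, hb] at h
  norm_cast at h
  have e : y - (t • w + (1 - t) • p) = (y - p) - t • (w - p) := by module
  rw [e, norm_sub_sq_real (y - p), norm_smul, inner_smul_right, mul_pow, Real.norm_eq_abs, sq_abs] at h
  refine nonneg_of_mul_nonneg_right (a := t) ?_ ht
  nlinarith

theorem stmt14
    {E : Type*} [NormedAddCommGroup E] [InnerProductSpace ℝ E] [CompleteSpace E]
    -- φ differentiable and convex with modulus of strong convexity μφ ≥ 0
    (φ : E → ℝ) (gphi : E → E) (hφgrad : ∀ u, HasGradientAt φ (gphi u) u)
    (μφ : ℝ) (hμφ : 0 ≤ μφ)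
    (hφsc : ∀ u w : E, φ u + ⟪gphi u, w - u⟫ + μφ / 2 * ‖w - u‖ ^ 2 ≤ φ w)
    -- ψ proper lsc convex with modulus of strong convexity μψ ≥ 0
    (ψ : E → EReal)
    (hψbot : ∀ z, ψ z ≠ ⊥) (hψproper : ∃ z, ψ z ≠ ⊤)
    (hψlsc : LowerSemicontinuous ψ)
    (hψconv : ∀ (w z : E) (t : ℝ), 0 ≤ t → t ≤ 1 →
      ψ (t • w + (1 - t) • z) ≤ (t : EReal) * ψ w + ((1 - t : ℝ) : EReal) * ψ z)
    (μψ : ℝ) (hμψ : 0 ≤ μψ)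
    (hψsc : ∀ u w g : E,
      (∀ z : E, ψ u + ((⟪g, z - u⟫ : ℝ) : EReal) ≤ ψ z) →
      ψ u + ((⟪g, w - u⟫ + μψ / 2 * ‖w - u‖ ^ 2 : ℝ) : EReal) ≤ ψ w)
    -- x in the domain of ψ, and x⁺ the unique minimizer of z ↦ ψ(z) + ½‖x − ∇φ(x) − z‖²
    (x : E) (hx : ψ x ≠ ⊤)
    (xp : E)
    (hxp : ∀ w : E, w ≠ xp →
      ψ xp + ((1 / 2 * ‖x - gphi x - xp‖ ^ 2 : ℝ) : EReal) <
        ψ w + ((1 / 2 * ‖x - gphi x - w‖ ^ 2 : ℝ) : EReal)) :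
    ∀ z : E,
      (((1 + μψ) * ⟪x - xp, z - x⟫ : ℝ) : EReal) ≤
        ((φ z : EReal) + ψ z - ((φ x : EReal) + ψ x)
            - (((μφ + μψ) / 2 * ‖z - x‖ ^ 2 : ℝ) : EReal))
        + (ψ x - ψ xp + ((⟪gphi x, x - xp⟫ : ℝ) : EReal))
        - (((1 + μψ / 2) * ‖x - xp‖ ^ 2 : ℝ) : EReal) := by
  intro z
  have hxpT : ψ xp ≠ ⊤ := by
    by_cases h : x = xp
    · rwa [← h]
    · intro hT
      have := hxp x h
      rw [hT, EReal.top_add_coe] at this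
      exact not_top_lt this
  have hmin : ∀ w : E, ψ xp + ((1 / 2 * ‖x - gphi x - xp‖ ^ 2 : ℝ) : EReal) ≤
      ψ w + ((1 / 2 * ‖x - gphi x - w‖ ^ 2 : ℝ) : EReal) := fun w => by
    by_cases h : w = xp
    · rw [h]
    · exact (hxp w h).le
  have hsub := hψsc xp z _ (subgradient_of_prox ψ hψbot hψconv (x - gphi x) xp hxpT hmin)
  have hφ := hφsc x z
  obtain ⟨a, ha⟩ : ∃ a : ℝ, ψ xp = a := ⟨_, (EReal.coe_toReal hxpT (hψbot xp)).symm⟩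
  obtain ⟨c, hc⟩ : ∃ c : ℝ, ψ x = c := ⟨_, (EReal.coe_toReal hx (hψbot x)).symm⟩
  by_cases hz : ψ z = ⊤
  -- the right-hand side is `⊤`, all its other terms being finite
  · rw [hz, ha, hc, EReal.coe_add_top, ← EReal.coe_add, EReal.top_sub_coe, EReal.top_sub_coe,
      ← EReal.coe_sub, ← EReal.coe_add, EReal.top_add_coe, EReal.top_sub_coe]
    exact le_top
  obtain ⟨b, hb⟩ : ∃ b : ℝ, ψ z = b := ⟨_, (EReal.coe_toReal hz (hψbot z)).symm⟩
  rw [ha, hb] at hsub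
  rw [ha, hb, hc]
  norm_cast at hsub ⊢
  have e1 : z - xp = (z - x) + (x - xp) := by abel
  have e2 : x - gphi x - xp = (x - xp) - gphi x := by abel
  rw [e1, e2, norm_add_sq_real, inner_add_right, inner_sub_left (x - xp) (gphi x) (z - x),
    inner_sub_left (x - xp) (gphi x) (x - xp),
    real_inner_self_eq_norm_sq, real_inner_comm (x - xp) (z - x)] at hsub
  nlinarith
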